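/- Let (μ,K) ∈ ℚ_{>0} × ℕ* with K ∈ μℕ*, λ ∈ ℂ*, let f be meromorphic on a punctured neighborhood of 0 in ℂ* and f̂ = Σ_{i∈ℕ} f̂_i z^i ∈ ℂ[[z]] with f ∼^{[λ]}_{μ,K} f̂. Let (μ₁,K₁) ∈ ℚ_{>0} × ℕ* with K₁ ∈ μ₁ℕ* and K/K₁ ∈ ℕ*, and assume f ∈ ℍ^{[λ]}_{μ₁,K₁}. Then L^{[λ]}_{μ₁,K₁}(f) ∼^{[λ]}_{μ₂,K₁} L̂_{μ₁}(f̂), where μ₂ ∈ ℚ_{>0} is defined by μ₂^{−1} := μ^{−1} + μ₁^{−1}. -/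

import Mathlib

/-- The Jacobi theta function `Θ_q(z) = ∑_{ℓ ∈ ℤ} q^{-ℓ(ℓ+1)/2} z^ℓ`. -/
noncomputable def theta (q z : ℂ) : ℂ := ∑' ℓ : ℤ, q ^ (-(ℓ * (ℓ + 1) / 2)) * z ^ ℓ

/-- The real theta function `Θ_Q(x) = ∑_{ℓ ∈ ℤ} Q^{-ℓ(ℓ+1)/2} x^ℓ` for real `Q, x`;
for `Q > 1` and `x > 0` it is a positive real number. -/
noncomputable def thetaR (Q x : ℝ) : ℝ := ∑' ℓ : ℤ, Q ^ (-(ℓ * (ℓ + 1) / 2)) * x ^ ℓ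

/-- Rational powers `q^α := exp(α log q)` of a complex number, via the principal logarithm. -/
noncomputable def qpow (q : ℂ) (α : ℚ) : ℂ := Complex.exp ((α : ℂ) * Complex.log q)

/-- Rational (real) powers `b^α` for a real base. -/
noncomputable def qpowR (b : ℝ) (α : ℚ) : ℝ := b ^ (α : ℝ)

/-- The `ε`-neighborhood of the discrete `q^{1/K}`-spiral `λ q^{K⁻¹ℤ}` in `ℂ*`:
`∪_{ℓ∈K⁻¹ℤ} {z ∈ ℂ* : |z - q^ℓ λ| < ε |q^ℓ λ|}`. -/
def spiralNhd (q lam : ℂ) (K : ℕ) (ε : ℝ) : Set ℂ :=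
  {z : ℂ | z ≠ 0 ∧ ∃ j : ℤ,
    ‖z - qpow q ((j : ℚ) / K) * lam‖ < ε * ‖qpow q ((j : ℚ) / K) * lam‖}

/-- Membership in the space `ℍ^{[λ]}_{μ,K}`: `f` is meromorphic on a punctured
neighborhood of `0` in `ℂ*` and can be continued analytically to a connected domain `Ω`
containing an `ε`-neighborhood of the spiral `λ q^{K⁻¹ℤ}`, with
`q^{1/μ}`-exponential growth of order 1 at infinity:
`|f(z)| < L·Θ_{|q|^{1/μ}}(M|z|)` on `Ω`. -/
def memH (q : ℂ) (μ : ℚ) (K : ℕ) (lam : ℂ) (f : ℂ → ℂ) : Prop :=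
  (∃ r > 0, MeromorphicOn f {z : ℂ | z ≠ 0 ∧ ‖z‖ < r}) ∧
  ∃ ε > 0, ∃ Ω : Set ℂ, IsOpen Ω ∧ IsConnected Ω ∧ spiralNhd q lam K ε ⊆ Ω ∧
    AnalyticOnNhd ℂ f Ω ∧
    ∃ L > 0, ∃ M > 0, ∀ z ∈ Ω, ‖f z‖ < L * thetaR (qpowR ‖q‖ (1 / μ)) (M * ‖z‖)

/-- The `q`-Laplace transform of order `μ` in the direction `λ`:
`L^{[λ]}_{μ,K}(f)(z) = (μ/K) ∑_{ℓ∈K⁻¹ℤ} f(q^ℓ λ) / Θ_{q^{1/μ}}(q^{1/μ+ℓ} λ / z)`. -/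
noncomputable def qLaplace (q : ℂ) (μ : ℚ) (K : ℕ) (lam : ℂ) (f : ℂ → ℂ) (z : ℂ) : ℂ :=
  ((μ : ℂ) / (K : ℂ)) * ∑' j : ℤ, f (qpow q ((j : ℚ) / K) * lam) /
    theta (qpow q (1 / μ)) (qpow q (1 / μ + (j : ℚ) / K) * lam / z)

/-- The q-Gevrey asymptotic relation `f ∼^{[λ]}_{μ,K} f̂` for a function `f` and a formal
power series with coefficients `a : ℕ → ℂ`: for all sufficiently small `ε, R > 0` there are
`L, M > 0` such that for every `k ∈ ℕ` and every `z` with `0 < |z| < R` staying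
`ε`-away from the spiral `-λq^{K⁻¹ℤ}`,
`|f(z) - ∑_{i<k} aᵢ zⁱ| < L M^k |q|^{k(k-1)/(2μ)} |z|^k`. -/
def qAsymptotic (q : ℂ) (μ : ℚ) (K : ℕ) (lam : ℂ) (f : ℂ → ℂ) (a : ℕ → ℂ) : Prop :=
  ∃ ε₀ > 0, ∃ R₀ > 0, ∀ ε : ℝ, 0 < ε → ε < ε₀ → ∀ R : ℝ, 0 < R → R < R₀ →
    ∃ L > 0, ∃ M > 0, ∀ k : ℕ, ∀ z : ℂ, z ≠ 0 → ‖z‖ < R →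
      (∀ j : ℤ, ε * ‖qpow q ((j : ℚ) / K) * lam‖ ≤ ‖z + qpow q ((j : ℚ) / K) * lam‖) →
      ‖f z - ∑ i ∈ Finset.range k, a i * z ^ i‖
        < L * M ^ k * ‖q‖ ^ (((k * (k - 1) : ℚ) / (2 * μ) : ℚ) : ℝ) * ‖z‖ ^ k

/-!
Write `p = q^{1/μ₁}` and `s = q^{1/K₁}`, so that `s ^ m = p` with `m = K₁ / μ₁`. By the functional
equation `Θ_p (p w) = w Θ_p (w)`, each residue class of exponents `j` modulo `m` contributes
`p^{i(i-1)/2} z^i` to the moment `∑_j (s^j λ)^i / Θ_p (p s^j λ / z)`. Hence the normalized sum sends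
`x^i` to the term `p^{i(i-1)/2} z^i` of the formal `q`-Laplace transform, and only the remainders of
`f` on the spiral have to be summed against `1 / Θ_p`.

Near `0` these remainders are controlled by the asymptotic expansion. Away from `0` they are at most
a `k`-th power plus the tail of order `k` of a partial theta series, by the growth of `f`. The
bound `|Θ_p (w)| ≥ c Θ_{|p|} (|w|)` holds at a relative distance `ε` from its zeros: the
triple product shows that there are no other zeros, and quasi-periodicity reduces the bound to a
compact annulus. The power and the tail can then be integrated exactly with the real moments,
and the tail gives a geometric series in `|z|` starting at `|z|^k`.
-/

open Filter Topology Finset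

/-- The exponent `l (l + 1) / 2` of the theta series; the integer division is exact. -/
def triangular (l : ℤ) : ℤ := l * (l + 1) / 2

section Triangular

theorem two_mul_triangular (l : ℤ) : 2 * triangular l = l * (l + 1) :=
  Int.mul_ediv_cancel' (Int.even_mul_succ_self l).two_dvd

theorem triangular_neg_sub_one (l : ℤ) : triangular (-l - 1) = triangular l := by
  linarith [two_mul_triangular (-l - 1), two_mul_triangular l]

theorem triangular_add (k n : ℤ) : triangular (k + n) = triangular k + triangular n + k * n := by
  linarith [two_mul_triangular (k + n), two_mul_triangular k, two_mul_triangular n]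

theorem triangular_sub_one (n : ℤ) : triangular (n - 1) = triangular n - n := by
  linarith [two_mul_triangular (n - 1), two_mul_triangular n]

theorem triangular_add_one (n : ℤ) : triangular (n + 1) = triangular n + n + 1 := by
  linarith [two_mul_triangular (n + 1), two_mul_triangular n]

theorem triangular_natCast_sub_one (n : ℕ) : triangular (n - 1) = n.choose 2 := by
  have h : (2 : ℚ) * triangular (n - 1) = (n - 1) * (n - 1 + 1) := by
    exact_mod_cast two_mul_triangular (n - 1)
  have : (triangular (n - 1) : ℚ) = n.choose 2 := by
    rw [Nat.cast_choose_two]; linarith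
  exact_mod_cast this

theorem triangular_natCast (n : ℕ) : triangular n = (n + 1).choose 2 := by
  simpa using triangular_natCast_sub_one (n + 1)

theorem choose_two_add_one (n : ℕ) : (n + 1).choose 2 = n.choose 2 + n := by
  rw [Nat.choose_succ_succ' n 1, Nat.choose_one_right, add_comm]

end Triangular

/-- The tail of order `k` of the partial theta series `∑_{n ≥ 0} P^{-n(n+1)/2} x^n`; the whole
partial theta series is the tail of order `0`. -/
noncomputable def partialThetaTail (P : ℝ) (k : ℕ) (x : ℝ) : ℝ :=
  ∑' n : ℕ, (P ^ (n + k + 1).choose 2)⁻¹ * x ^ (n + k)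

section PartialTheta

variable {P : ℝ}

theorem summable_partialTheta (hP : 1 < P) (x : ℝ) :
    Summable fun n : ℕ => (P ^ (n + 1).choose 2)⁻¹ * x ^ n := by
  have hP₀ : 0 < P := one_pos.trans hP
  have ratio_tendsto : Tendsto (fun n : ℕ => |x| * P⁻¹ ^ (n + 1)) atTop (𝓝 0) := by
    simpa using ((tendsto_pow_atTop_nhds_zero_of_lt_one (inv_nonneg.2 hP₀.le)
      (inv_lt_one_of_one_lt₀ hP)).comp (tendsto_add_atTop_nat 1)).const_mul |x|
  refine summable_of_ratio_norm_eventually_le (r := 1 / 2) (by norm_num) ?_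
  filter_upwards [ratio_tendsto.eventually_le_const one_half_pos] with n hn
  rw [choose_two_add_one (n + 1), pow_add, pow_succ x, mul_inv, ← inv_pow P (n + 1),
    Real.norm_eq_abs, Real.norm_eq_abs, abs_mul, abs_mul, abs_mul, abs_mul,
    abs_of_pos (by positivity : 0 < P⁻¹ ^ (n + 1))]
  calc _ = |x| * P⁻¹ ^ (n + 1) * (|(P ^ (n + 1).choose 2)⁻¹| * |x ^ n|) := by ring
    _ ≤ _ := by gcongr

theorem summable_partialThetaTail (hP : 1 < P) (k : ℕ) (x : ℝ) :
    Summable fun n : ℕ => (P ^ (n + k + 1).choose 2)⁻¹ * x ^ (n + k) :=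
  (summable_nat_add_iff k).2 (summable_partialTheta hP x)

theorem partialThetaTail_nonneg (hP : 0 ≤ P) (k : ℕ) {x : ℝ} (hx : 0 ≤ x) :
    0 ≤ partialThetaTail P k x :=
  tsum_nonneg fun n => by positivity

theorem partialThetaTail_zero_eq_sum_add (hP : 1 < P) (k : ℕ) (x : ℝ) :
    partialThetaTail P 0 x =
      ∑ n ∈ range k, (P ^ (n + 1).choose 2)⁻¹ * x ^ n + partialThetaTail P k x :=
  ((summable_partialTheta hP x).sum_add_tsum_nat_add k).symm

theorem partialThetaTail_zero_mono (hP : 1 < P) {x y : ℝ} (hx : 0 ≤ x) (hxy : x ≤ y) :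
    partialThetaTail P 0 x ≤ partialThetaTail P 0 y := by
  have : 0 < P := one_pos.trans hP
  exact (summable_partialThetaTail hP 0 x).tsum_le_tsum (fun n => by gcongr)
    (summable_partialThetaTail hP 0 y)

theorem one_le_partialThetaTail_zero (hP : 1 < P) {x : ℝ} (hx : 0 ≤ x) :
    1 ≤ partialThetaTail P 0 x := by
  have : 0 < P := one_pos.trans hP
  calc 1 = (P ^ (0 + 0 + 1).choose 2)⁻¹ * x ^ (0 + 0) := by simp
    _ ≤ partialThetaTail P 0 x :=
      (summable_partialThetaTail hP 0 x).le_tsum 0 fun n _ => by positivity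

end PartialTheta

/-- The theta series `∑_{l ∈ ℤ} p^{-l(l+1)/2} z^l` over an arbitrary topological field. The complex
function `theta` and the real function `thetaR` are its instances over `ℂ` and `ℝ`. -/
noncomputable def thetaSeries {𝕜 : Type*} [Field 𝕜] [TopologicalSpace 𝕜] (p z : 𝕜) : 𝕜 :=
  ∑' l : ℤ, p ^ (-triangular l) * z ^ l

section RealTheta

variable {P x : ℝ}

theorem thetaSeries_term_natCast (n : ℕ) :
    P ^ (-triangular n) * x ^ (n : ℤ) = (P ^ (n + 1).choose 2)⁻¹ * x ^ n := by
  rw [triangular_natCast, zpow_neg, zpow_natCast, zpow_natCast]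

theorem thetaSeries_term_neg_add_one (n : ℕ) :
    P ^ (-triangular (-(n + 1 : ℤ))) * x ^ (-(n + 1 : ℤ)) =
      x⁻¹ * ((P ^ (n + 1).choose 2)⁻¹ * x⁻¹ ^ n) := by
  rw [neg_add', triangular_neg_sub_one, triangular_natCast, zpow_neg P, zpow_natCast, ← neg_add',
    zpow_neg, ← inv_zpow, ← Nat.cast_add_one, zpow_natCast, pow_succ]
  ring

theorem summable_thetaSeries_real (hP : 1 < P) (x : ℝ) :
    Summable fun l : ℤ => P ^ (-triangular l) * x ^ l :=
  .of_nat_of_neg_add_one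
    (by simpa only [thetaSeries_term_natCast] using summable_partialTheta hP x)
    (by simpa only [thetaSeries_term_neg_add_one] using
      (summable_partialTheta hP x⁻¹).mul_left x⁻¹)

theorem thetaSeries_eq_partialTheta_add (hP : 1 < P) (x : ℝ) :
    thetaSeries P x = partialThetaTail P 0 x + x⁻¹ * partialThetaTail P 0 x⁻¹ := by
  rw [thetaSeries, tsum_of_nat_of_neg_add_one
    (by simpa only [thetaSeries_term_natCast] using summable_partialTheta hP x)
    (by simpa only [thetaSeries_term_neg_add_one] using
      (summable_partialTheta hP x⁻¹).mul_left x⁻¹)]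
  simp only [thetaSeries_term_natCast, thetaSeries_term_neg_add_one, tsum_mul_left,
    partialThetaTail, add_zero]

theorem thetaSeries_pos (hP : 1 < P) (hx : 0 < x) : 0 < thetaSeries P x := by
  have : 0 < P := one_pos.trans hP
  exact (summable_thetaSeries_real hP x).tsum_pos (fun l => by positivity) 0 (by positivity)

theorem exists_thetaSeries_le_partialTheta (hP : 1 < P) {x₀ : ℝ} (hx₀ : 0 < x₀) :
    ∃ S > 0, ∀ x ≥ x₀, thetaSeries P x ≤ S * partialThetaTail P 0 x := by
  have hS := one_le_partialThetaTail_zero hP (inv_pos.2 hx₀).le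
  refine ⟨1 + x₀⁻¹ * partialThetaTail P 0 x₀⁻¹, by positivity, fun x hx => ?_⟩
  have hx' : 0 < x := hx₀.trans_le hx
  have negative_part : x⁻¹ * partialThetaTail P 0 x⁻¹ ≤ x₀⁻¹ * partialThetaTail P 0 x₀⁻¹ := by
    have hmono := partialThetaTail_zero_mono hP (inv_pos.2 hx').le (inv_anti₀ hx₀ hx)
    have hnonneg := partialThetaTail_nonneg (one_pos.trans hP).le 0 (inv_pos.2 hx').le
    gcongr
  calc thetaSeries P x
      ≤ partialThetaTail P 0 x + x₀⁻¹ * partialThetaTail P 0 x₀⁻¹ * 1 := by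
        rw [thetaSeries_eq_partialTheta_add hP, mul_one]; gcongr
    _ ≤ partialThetaTail P 0 x + x₀⁻¹ * partialThetaTail P 0 x₀⁻¹ * partialThetaTail P 0 x := by
        gcongr
        exact one_le_partialThetaTail_zero hP hx'.le
    _ = _ := by ring

end RealTheta

section Theta

variable {𝕜 : Type*} [NormedField 𝕜] {p z : 𝕜}

theorem summable_norm_thetaSeries (hp : 1 < ‖p‖) (z : 𝕜) :
    Summable fun l : ℤ => ‖p ^ (-triangular l) * z ^ l‖ := by
  simpa only [norm_mul, norm_zpow] using summable_thetaSeries_real hp ‖z‖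

theorem thetaSeries_zpow_mul (hp : p ≠ 0) (hz : z ≠ 0) (n : ℤ) :
    thetaSeries p (p ^ n * z) = p ^ triangular (n - 1) * z ^ n * thetaSeries p z := by
  unfold thetaSeries
  rw [← (Equiv.addRight n).tsum_eq, ← tsum_mul_left]
  refine tsum_congr fun k => ?_
  have exponents : -triangular (k + n) + n * (k + n) = triangular (n - 1) + -triangular k := by
    rw [triangular_add, triangular_sub_one]
    linarith [two_mul_triangular n]
  rw [Equiv.coe_addRight, mul_zpow, ← zpow_mul, ← mul_assoc, ← zpow_add₀ hp, exponents,
    zpow_add₀ hz, zpow_add₀ hp]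
  ring

theorem thetaSeries_inv (hz : z ≠ 0) : thetaSeries p z⁻¹ = z * thetaSeries p z := by
  unfold thetaSeries
  rw [← (Equiv.subLeft (-1 : ℤ)).tsum_eq, ← tsum_mul_left]
  refine tsum_congr fun k => ?_
  rw [Equiv.subLeft_apply, show -1 - k = -k - 1 by ring, triangular_neg_sub_one, inv_zpow',
    show -(-k - 1) = k + 1 by ring, zpow_add_one₀ hz]
  ring

theorem thetaSeries_pow_mul_inv (hp : p ≠ 0) (hz : z ≠ 0) (i : ℕ) :
    thetaSeries p (p ^ i * z⁻¹) = p ^ i.choose 2 * z⁻¹ ^ i * (z * thetaSeries p z) := by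
  have := thetaSeries_zpow_mul hp (inv_ne_zero hz) i
  rwa [triangular_natCast_sub_one, thetaSeries_inv hz, zpow_natCast, zpow_natCast, zpow_natCast]
    at this

theorem thetaSeries_mul_zpow_mul (hp : p ≠ 0) (hz : z ≠ 0) (n : ℤ) :
    thetaSeries p (p * (p ^ n * z)) = p ^ triangular n * z ^ (n + 1) * thetaSeries p z := by
  rw [← mul_assoc, ← zpow_one_add₀ hp, thetaSeries_zpow_mul hp hz, add_sub_cancel_left, add_comm]

variable [CompleteSpace 𝕜]

theorem summable_thetaSeries (hp : 1 < ‖p‖) (z : 𝕜) :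
    Summable fun l : ℤ => p ^ (-triangular l) * z ^ l :=
  (summable_norm_thetaSeries hp z).of_norm

/-- The terms are those of the series of `thetaSeries p (p ^ i * z⁻¹)`, up to a factor independent
of `n`. -/
theorem hasSum_pow_div_thetaSeries (hp : 1 < ‖p‖) (hz : z ≠ 0) (hθ : thetaSeries p z ≠ 0) (i : ℕ) :
    HasSum (fun n : ℤ => (p ^ n * z) ^ i / thetaSeries p (p * (p ^ n * z))) (p ^ i.choose 2) := by
  have hp₀ : p ≠ 0 := norm_pos_iff.1 (one_pos.trans hp)
  have hsum := ((summable_thetaSeries hp (p ^ i * z⁻¹)).hasSum).mul_left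
    (z ^ i / (z * thetaSeries p z))
  change HasSum _ (_ * thetaSeries p (p ^ i * z⁻¹)) at hsum
  rw [thetaSeries_pow_mul_inv hp₀ hz] at hsum
  convert hsum using 1
  · funext n
    rw [thetaSeries_mul_zpow_mul hp₀ hz, mul_pow, mul_zpow, inv_zpow, zpow_neg, zpow_add_one₀ hz,
      ← zpow_natCast (p ^ n), ← zpow_mul, ← zpow_natCast p i, ← zpow_mul, mul_comm n (i : ℤ)]
    field_simp
  · rw [inv_pow]
    field_simp

end Theta

theorem hasSum_int_of_hasSum_residues {α : Type*} [AddCommMonoid α] [TopologicalSpace α]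
    [ContinuousAdd α] {f : ℤ → α} {m : ℕ} [NeZero m] {v : Fin m → α}
    (h : ∀ r : Fin m, HasSum (fun n : ℤ => f (n * m + r)) (v r)) : HasSum f (∑ r, v r) := by
  rw [← (Int.divModEquiv m).symm.hasSum_iff]
  have fiber (r : Fin m) :
      HasSum (fun a : ℤ × Fin m => if a.2 = r then f (a.1 * m + a.2) else 0) (v r) := by
    rw [← (Prod.mk_left_injective r).hasSum_iff]
    · exact (h r).congr_fun fun n => by simp
    · rintro ⟨n, r'⟩ hr'
      exact if_neg fun h : r' = r => hr' ⟨n, by rw [h]⟩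
  refine (hasSum_sum fun r (_ : r ∈ univ) => fiber r).congr_fun fun a => ?_
  rw [Finset.sum_ite_eq, if_pos (mem_univ _), Function.comp_apply]
  rfl

theorem hasSum_pow_div_thetaSeries_of_pow_eq {𝕜 : Type*} [NormedField 𝕜] [CompleteSpace 𝕜]
    {p s z : 𝕜} (hp : 1 < ‖p‖) {m : ℕ} [NeZero m] (hs : s ^ m = p) (hz : z ≠ 0)
    (hθ : ∀ j : ℤ, thetaSeries p (s ^ j * z) ≠ 0) (i : ℕ) :
    HasSum (fun j : ℤ => (s ^ j * z) ^ i / thetaSeries p (p * (s ^ j * z)))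
      (m * p ^ i.choose 2) := by
  have hs₀ : s ≠ 0 := ne_zero_pow (NeZero.ne m) (hs ▸ norm_pos_iff.1 (one_pos.trans hp))
  have residue (r : Fin m) : HasSum (fun n : ℤ =>
      (s ^ (n * m + r : ℤ) * z) ^ i / thetaSeries p (p * (s ^ (n * m + r : ℤ) * z)))
      (p ^ i.choose 2) := by
    refine (hasSum_pow_div_thetaSeries hp (mul_ne_zero (zpow_ne_zero r hs₀) hz)
      (hθ r) i).congr_fun fun n => ?_
    rw [zpow_add₀ hs₀, mul_comm n, zpow_mul, zpow_natCast s m, hs, mul_assoc]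
  have total := hasSum_int_of_hasSum_residues
    (f := fun j : ℤ => (s ^ j * z) ^ i / thetaSeries p (p * (s ^ j * z))) residue
  rwa [sum_const, card_univ, Fintype.card_fin, nsmul_eq_mul] at total

section GaussianBinomial

variable {𝕜 : Type*} [Field 𝕜] {x : 𝕜}

/-- The `q`-Pochhammer symbol `(x; x)_n = ∏_{1 ≤ i ≤ n} (1 - x^i)`. -/
def qPochhammer (x : 𝕜) (n : ℕ) : 𝕜 := ∏ i ∈ range n, (1 - x ^ (i + 1))

/-- The inverse of `(x; x)_n`, extended by `0` to negative `n`. With this extension the recurrence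
`one_sub_zpow_mul_qPochhammerInv` holds on all of `ℤ`. -/
def qPochhammerInv (x : 𝕜) (n : ℤ) : 𝕜 := if n < 0 then 0 else (qPochhammer x n.toNat)⁻¹

/-- The coefficient of `w ^ j` in `∏_{i < N} (1 + w x^{i + 1}) (1 + w⁻¹ x^i)`, which is
`x^{j (j + 1) / 2}` times the Gaussian binomial coefficient of `2N` over `N + j`. -/
def tripleProductCoeff (x : 𝕜) (N : ℕ) (j : ℤ) : 𝕜 :=
  x ^ triangular j * qPochhammer x (2 * N) * (qPochhammerInv x (N - j) * qPochhammerInv x (N + j))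

theorem qPochhammer_succ (x : 𝕜) (n : ℕ) :
    qPochhammer x (n + 1) = qPochhammer x n * (1 - x ^ (n + 1)) :=
  prod_range_succ _ _

theorem qPochhammerInv_of_neg {n : ℤ} (hn : n < 0) : qPochhammerInv x n = 0 := if_pos hn

theorem qPochhammerInv_natCast (n : ℕ) : qPochhammerInv x n = (qPochhammer x n)⁻¹ := by
  rw [qPochhammerInv, if_neg (by lia), Int.toNat_natCast]

theorem one_sub_zpow_mul_qPochhammerInv (hx : ∀ i : ℕ, 1 - x ^ (i + 1) ≠ 0) (n : ℤ) :
    (1 - x ^ n) * qPochhammerInv x n = qPochhammerInv x (n - 1) := by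
  rcases lt_trichotomy n 0 with hn | rfl | hn
  · rw [qPochhammerInv_of_neg hn, qPochhammerInv_of_neg (by lia), mul_zero]
  · rw [zpow_zero, sub_self, zero_mul, qPochhammerInv_of_neg (by lia)]
  · obtain ⟨k, rfl⟩ : ∃ k : ℕ, n = (k + 1 : ℕ) := ⟨(n - 1).toNat, by lia⟩
    rw [zpow_natCast, qPochhammerInv_natCast, Nat.cast_add_one, add_sub_cancel_right,
      qPochhammerInv_natCast, qPochhammer_succ, mul_inv_rev, mul_inv_cancel_left₀ (hx k)]

theorem tripleProductCoeff_zero (j : ℤ) :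
    tripleProductCoeff x 0 j = if j = 0 then 1 else 0 := by
  rcases lt_trichotomy j 0 with hj | rfl | hj
  · simp [tripleProductCoeff, qPochhammerInv_of_neg hj, hj.ne]
  · simp [tripleProductCoeff, qPochhammerInv, qPochhammer, triangular]
  · simp [tripleProductCoeff, qPochhammerInv_of_neg (neg_lt_zero.2 hj), hj.ne']

theorem tripleProductCoeff_succ (hx₀ : x ≠ 0) (hx : ∀ i : ℕ, 1 - x ^ (i + 1) ≠ 0) (N : ℕ) (j : ℤ) :
    tripleProductCoeff x (N + 1) j = (1 + x ^ (2 * N + 1)) * tripleProductCoeff x N j +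
      x ^ (N + 1) * tripleProductCoeff x N (j - 1) + x ^ N * tripleProductCoeff x N (j + 1) := by
  have recurrence := one_sub_zpow_mul_qPochhammerInv hx
  set A := x ^ ((N : ℤ) - j) with hA
  set B := x ^ ((N : ℤ) + j) with hB
  set a := qPochhammerInv x ((N : ℤ) - j + 1) with ha
  set b := qPochhammerInv x ((N : ℤ) + j + 1) with hb
  have left_zero : qPochhammerInv x (N - j) = (1 - A * x) * a := by
    rw [hA, ha, ← zpow_add_one₀ hx₀, recurrence, add_sub_cancel_right]
  have right_zero : qPochhammerInv x (N + j) = (1 - B * x) * b := by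
    rw [hB, hb, ← zpow_add_one₀ hx₀, recurrence, add_sub_cancel_right]
  have left_one : qPochhammerInv x (N - (j + 1)) = (1 - A) * ((1 - A * x) * a) := by
    rw [← left_zero, hA, recurrence, sub_add_eq_sub_sub]
  have right_one : qPochhammerInv x (N + (j - 1)) = (1 - B) * ((1 - B * x) * b) := by
    rw [← right_zero, hB, recurrence, add_sub_assoc]
  have product : x ^ (2 * N) = A * B := by
    rw [hA, hB, ← zpow_add₀ hx₀, ← zpow_natCast]; congr 1; push_cast; ring
  have lower : x ^ (N + 1) * x ^ triangular (j - 1) = x ^ triangular j * (A * x) := by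
    rw [hA, ← zpow_add_one₀ hx₀, ← zpow_natCast, ← zpow_add₀ hx₀, ← zpow_add₀ hx₀,
      triangular_sub_one]
    congr 1; push_cast; ring
  have upper : x ^ N * x ^ triangular (j + 1) = x ^ triangular j * (B * x) := by
    rw [hB, ← zpow_add_one₀ hx₀, ← zpow_natCast, ← zpow_add₀ hx₀, ← zpow_add₀ hx₀,
      triangular_add_one]
    congr 1; ring
  rw [tripleProductCoeff, tripleProductCoeff, tripleProductCoeff, tripleProductCoeff,
    left_zero, right_zero, left_one, right_one, show 2 * (N + 1) = 2 * N + 1 + 1 by ring,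
    qPochhammer_succ, qPochhammer_succ, pow_succ x (2 * N + 1), pow_succ x (2 * N), product,
    show ((N + 1 : ℕ) : ℤ) - j = N - j + 1 by push_cast; ring,
    show ((N + 1 : ℕ) : ℤ) + j = N + j + 1 by push_cast; ring,
    show (N : ℤ) - (j - 1) = N - j + 1 by ring, show (N : ℤ) + (j + 1) = N + j + 1 by ring, ← ha,
    ← hb]
  linear_combination
    -(qPochhammer x (2 * N) * (a * ((1 - B) * ((1 - B * x) * b)))) * lower -
      qPochhammer x (2 * N) * ((1 - A) * ((1 - A * x) * a) * b) * upper

theorem hasSum_tripleProductCoeff [TopologicalSpace 𝕜] [IsTopologicalRing 𝕜] {w : 𝕜} (hx₀ : x ≠ 0)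
    (hx : ∀ i : ℕ, 1 - x ^ (i + 1) ≠ 0) (hw : w ≠ 0) (N : ℕ) :
    HasSum (fun j : ℤ => tripleProductCoeff x N j * w ^ j)
      (∏ i ∈ range N, (1 + w * x ^ (i + 1)) * (1 + w⁻¹ * x ^ i)) := by
  induction N with
  | zero =>
    refine (hasSum_ite_eq (0 : ℤ) (1 : 𝕜)).congr_fun fun j => ?_
    rw [tripleProductCoeff_zero, ite_mul, one_mul, zero_mul]
    exact ite_congr rfl (fun hj => by rw [hj, zpow_zero]) fun _ => rfl
  | succ N ih =>
    have shifted_down := ((Equiv.subRight (1 : ℤ)).hasSum_iff.2 ih).mul_left (w * x ^ (N + 1))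
    have shifted_up := ((Equiv.addRight (1 : ℤ)).hasSum_iff.2 ih).mul_left (w⁻¹ * x ^ N)
    have total := ((ih.mul_left (1 + x ^ (2 * N + 1))).add shifted_down).add shifted_up
    have factor : (1 + w * x ^ (N + 1)) * (1 + w⁻¹ * x ^ N) =
        1 + x ^ (2 * N + 1) + w * x ^ (N + 1) + w⁻¹ * x ^ N := by
      field_simp
      ring
    rw [← add_mul, ← add_mul, ← factor,
      mul_comm (_ * _) (∏ _ ∈ _, _), ← prod_range_succ] at total
    refine total.congr_fun fun j => ?_
    simp only [Function.comp_apply, Equiv.subRight_apply, Equiv.coe_addRight,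
      tripleProductCoeff_succ hx₀ hx, zpow_sub_one₀ hw, zpow_add_one₀ hw]
    field_simp

end GaussianBinomial

section TripleProduct

variable {𝕜 : Type*} [NormedField 𝕜] {x p w : 𝕜}

theorem one_sub_pow_succ_ne_zero (hx : ‖x‖ < 1) (i : ℕ) : 1 - x ^ (i + 1) ≠ 0 := by
  refine sub_ne_zero.2 fun h => (pow_lt_one₀ (norm_nonneg x) hx i.succ_ne_zero).ne ?_
  rw [← norm_pow, ← h, norm_one]

theorem summable_norm_mul_pow (hx : ‖x‖ < 1) (c : 𝕜) : Summable fun i : ℕ => ‖c * x ^ i‖ := by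
  simpa only [norm_mul, norm_pow] using
    (summable_geometric_of_lt_one (norm_nonneg x) hx).mul_left ‖c‖

variable [CompleteSpace 𝕜]

theorem tendsto_prod_one_add_mul_pow (hx : ‖x‖ < 1) (c : 𝕜) :
    Tendsto (fun n => ∏ i ∈ range n, (1 + c * x ^ i)) atTop (𝓝 (∏' i : ℕ, (1 + c * x ^ i))) :=
  (multipliable_one_add_of_summable (summable_norm_mul_pow hx c)).hasProd.tendsto_prod_nat

theorem tendsto_qPochhammer (hx : ‖x‖ < 1) :
    Tendsto (qPochhammer x) atTop (𝓝 (∏' i : ℕ, (1 - x ^ (i + 1)))) := by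
  unfold qPochhammer
  simpa only [neg_mul, ← pow_succ', ← sub_eq_add_neg] using tendsto_prod_one_add_mul_pow hx (-x)

theorem tprod_one_sub_pow_ne_zero (hx : ‖x‖ < 1) : ∏' i : ℕ, (1 - x ^ (i + 1)) ≠ 0 := by
  simp only [sub_eq_add_neg]
  refine tprod_one_add_ne_zero_of_summable (fun i => ?_) ?_
  · rw [← sub_eq_add_neg]
    exact one_sub_pow_succ_ne_zero hx i
  · simpa only [neg_mul, ← pow_succ'] using summable_norm_mul_pow hx (-x)

theorem tendsto_qPochhammerInv (hx : ‖x‖ < 1) :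
    Tendsto (qPochhammerInv x) atTop (𝓝 (∏' i : ℕ, (1 - x ^ (i + 1)))⁻¹) := by
  have inv_tendsto := (tendsto_qPochhammer hx).inv₀ (tprod_one_sub_pow_ne_zero hx)
  rw [← Nat.map_cast_int_atTop, tendsto_map'_iff]
  exact inv_tendsto.congr fun n => (qPochhammerInv_natCast n).symm

theorem tendsto_tripleProductCoeff (hx : ‖x‖ < 1) (j : ℤ) :
    Tendsto (fun N => tripleProductCoeff x N j) atTop
      (𝓝 (x ^ triangular j * (∏' i : ℕ, (1 - x ^ (i + 1)))⁻¹)) := by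
  have left : Tendsto (fun N : ℕ => qPochhammerInv x (N - j)) atTop _ :=
    (tendsto_qPochhammerInv hx).comp
      (tendsto_atTop_add_const_right _ (-j) tendsto_natCast_atTop_atTop)
  have right : Tendsto (fun N : ℕ => qPochhammerInv x (N + j)) atTop _ :=
    (tendsto_qPochhammerInv hx).comp
      (tendsto_atTop_add_const_right _ j tendsto_natCast_atTop_atTop)
  have middle : Tendsto (fun N : ℕ => qPochhammer x (2 * N)) atTop _ :=
    (tendsto_qPochhammer hx).comp (tendsto_id.const_mul_atTop' two_pos)
  have product := (middle.const_mul (x ^ triangular j)).mul (left.mul right)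
  rwa [mul_assoc, mul_inv_cancel_left₀ (tprod_one_sub_pow_ne_zero hx)] at product

theorem exists_norm_tripleProductCoeff_le (hx : ‖x‖ < 1) :
    ∃ C, ∀ N j, ‖tripleProductCoeff x N j‖ ≤ C * ‖x ^ triangular j‖ := by
  obtain ⟨A, hA⟩ := (Metric.isBounded_range_of_tendsto _ (tendsto_qPochhammer hx)).exists_norm_le
  obtain ⟨B, hB⟩ := (Metric.isBounded_range_of_tendsto _
    ((tendsto_qPochhammerInv hx).comp tendsto_natCast_atTop_atTop)).exists_norm_le
  have hA' (n : ℕ) : ‖qPochhammer x n‖ ≤ A := hA _ ⟨n, rfl⟩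
  have hB₀ : 0 ≤ B := (norm_nonneg _).trans (hB _ ⟨0, rfl⟩)
  have hB' (n : ℤ) : ‖qPochhammerInv x n‖ ≤ B := by
    rcases lt_or_ge n 0 with hn | hn
    · rwa [qPochhammerInv_of_neg hn, norm_zero]
    · lift n to ℕ using hn
      exact hB _ ⟨n, rfl⟩
  have hA₀ : 0 ≤ A := (norm_nonneg _).trans (hA' 0)
  refine ⟨A * (B * B), fun N j => ?_⟩
  rw [tripleProductCoeff, norm_mul, norm_mul, norm_mul]
  calc _ ≤ ‖x ^ triangular j‖ * A * (B * B) := by gcongr <;> simp only [hA', hB']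
    _ = _ := by ring

/-- The **Jacobi triple product** identity. -/
theorem thetaSeries_eq_tprod (hp : 1 < ‖p‖) (hw : w ≠ 0) :
    thetaSeries p w = (∏' i : ℕ, (1 - p⁻¹ ^ (i + 1))) *
      ((∏' i : ℕ, (1 + w * p⁻¹ ^ (i + 1))) * ∏' i : ℕ, (1 + w⁻¹ * p⁻¹ ^ i)) := by
  have hx : ‖p⁻¹‖ < 1 := by rw [norm_inv]; exact inv_lt_one_of_one_lt₀ hp
  have hx₀ : p⁻¹ ≠ 0 := inv_ne_zero (norm_pos_iff.1 (one_pos.trans hp))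
  have hpow (j : ℤ) : p⁻¹ ^ triangular j = p ^ (-triangular j) := by rw [inv_zpow, zpow_neg]
  obtain ⟨C, hC⟩ := exists_norm_tripleProductCoeff_le hx
  have series_tendsto := tendsto_tsum_of_dominated_convergence
    ((summable_norm_thetaSeries hp w).mul_left C)
    (fun j => (tendsto_tripleProductCoeff hx j).mul_const (w ^ j))
    (.of_forall fun N j => by
      rw [norm_mul, norm_mul, ← mul_assoc, ← hpow]; gcongr; exact hC N j)
  have product_tendsto := (tendsto_prod_one_add_mul_pow hx (w * p⁻¹)).mul
    (tendsto_prod_one_add_mul_pow hx w⁻¹)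
  simp only [mul_assoc w, ← pow_succ', ← prod_mul_distrib] at product_tendsto
  simp only [(hasSum_tripleProductCoeff hx₀ (one_sub_pow_succ_ne_zero hx) hw _).tsum_eq]
    at series_tendsto
  have limits_eq := tendsto_nhds_unique series_tendsto product_tendsto
  rw [← limits_eq, ← tsum_mul_left, thetaSeries]
  refine tsum_congr fun j => ?_
  rw [hpow, mul_right_comm, mul_comm _ (_)⁻¹,
    mul_inv_cancel_left₀ (tprod_one_sub_pow_ne_zero hx)]

theorem thetaSeries_ne_zero (hp : 1 < ‖p‖) (hw : w ≠ 0) (h : ∀ n : ℤ, w + p ^ n ≠ 0) :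
    thetaSeries p w ≠ 0 := by
  have hp₀ : p ≠ 0 := norm_pos_iff.1 (one_pos.trans hp)
  have hx : ‖p⁻¹‖ < 1 := by rw [norm_inv]; exact inv_lt_one_of_one_lt₀ hp
  rw [thetaSeries_eq_tprod hp hw]
  refine mul_ne_zero (tprod_one_sub_pow_ne_zero hx) (mul_ne_zero ?_ ?_)
  · refine tprod_one_add_ne_zero_of_summable (fun i hi => h (i + 1 : ℕ) ?_) ?_
    · rw [zpow_natCast]
      rw [inv_pow, ← div_eq_mul_inv, one_add_div (pow_ne_zero _ hp₀), div_eq_zero_iff] at hi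
      rw [add_comm, hi.resolve_right (pow_ne_zero _ hp₀)]
    · simpa only [mul_assoc, ← pow_succ'] using summable_norm_mul_pow hx (w * p⁻¹)
  · refine tprod_one_add_ne_zero_of_summable (fun i hi => h (-i) ?_) (summable_norm_mul_pow hx w⁻¹)
    rw [inv_mul_eq_div, one_add_div hw, div_eq_zero_iff] at hi
    rw [zpow_neg, zpow_natCast, ← inv_pow, hi.resolve_right hw]

end TripleProduct

section LowerBound

variable {𝕜 : Type*} [NormedField 𝕜] {p z : 𝕜} {ε : ℝ}

theorem zpow_le_zpow_add_zpow {a b x : ℝ} (ha : 0 < a) (hax : a ≤ x) (hxb : x ≤ b) (l : ℤ) :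
    x ^ l ≤ a ^ l + b ^ l := by
  have hx : 0 < x := ha.trans_le hax
  have hb : 0 < b := hx.trans_le hxb
  rcases le_total 0 l with hl | hl
  · exact (zpow_le_zpow_left₀ hl hx.le hxb).trans (le_add_of_nonneg_left (by positivity))
  · have inv_le := inv_anti₀ (zpow_pos ha (-l)) (zpow_le_zpow_left₀ (neg_nonneg.2 hl) ha.le hax)
    rw [zpow_neg, inv_inv, zpow_neg, inv_inv] at inv_le
    exact inv_le.trans (le_add_of_nonneg_right (by positivity))

theorem continuousAt_thetaSeries [CompleteSpace 𝕜] (hp : 1 < ‖p‖) (hz : z ≠ 0) :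
    ContinuousAt (thetaSeries p) z := by
  have hz' : 0 < ‖z‖ := norm_pos_iff.2 hz
  have annulus_mem : {y : 𝕜 | ‖z‖ / 2 < ‖y‖ ∧ ‖y‖ < 2 * ‖z‖} ∈ 𝓝 z :=
    ((isOpen_lt continuous_const continuous_norm).inter
      (isOpen_lt continuous_norm continuous_const)).mem_nhds
        ⟨half_lt_self hz', lt_two_mul_self hz'⟩
  refine ContinuousOn.continuousAt ?_ annulus_mem
  refine continuousOn_tsum (fun l => ?_)
    ((summable_thetaSeries_real hp (‖z‖ / 2)).add (summable_thetaSeries_real hp (2 * ‖z‖)))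
    fun l y hy => ?_
  · exact continuousOn_const.mul <| continuousOn_id.zpow₀ l fun y hy =>
      .inl (norm_pos_iff.1 ((half_pos hz').trans hy.1))
  · rw [norm_mul, norm_zpow, norm_zpow, ← mul_add]
    gcongr
    exact zpow_le_zpow_add_zpow (half_pos hz') hy.1.le hy.2.le l

/-- The points whose distance to each zero `-p ^ n` of `thetaSeries p` is at least `ε` times the
norm of that zero. -/
def awayFromThetaZeros (p : 𝕜) (ε : ℝ) : Set 𝕜 := {z | ∀ n : ℤ, ε * ‖p‖ ^ n ≤ ‖z + p ^ n‖}

theorem isClosed_awayFromThetaZeros (p : 𝕜) (ε : ℝ) : IsClosed (awayFromThetaZeros p ε) := by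
  simp only [awayFromThetaZeros, Set.ofPred_forall]
  exact isClosed_iInter fun n => isClosed_le continuous_const (by fun_prop)

theorem zpow_mul_mem_awayFromThetaZeros (hp : p ≠ 0) (hz : z ∈ awayFromThetaZeros p ε) (n : ℤ) :
    p ^ n * z ∈ awayFromThetaZeros p ε := fun k => by
  have scaled : p ^ n * z + p ^ k = p ^ n * (z + p ^ (k - n)) := by
    rw [mul_add, ← zpow_add₀ hp, add_sub_cancel]
  have hk : ‖p‖ ^ k = ‖p‖ ^ n * ‖p‖ ^ (k - n) := by
    rw [← zpow_add₀ (norm_ne_zero_iff.2 hp), add_sub_cancel]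
  rw [scaled, norm_mul, norm_zpow, hk, mul_left_comm]
  gcongr
  exact hz (k - n)

theorem thetaSeries_ne_zero_of_mem [CompleteSpace 𝕜] (hp : 1 < ‖p‖) (hε : 0 < ε) (hz₀ : z ≠ 0)
    (hz : z ∈ awayFromThetaZeros p ε) : thetaSeries p z ≠ 0 :=
  thetaSeries_ne_zero hp hz₀ fun n => norm_pos_iff.1 <|
    (mul_pos hε (zpow_pos (one_pos.trans hp) n)).trans_le (hz n)

theorem exists_mul_thetaSeries_norm_le_of_mem_annulus [ProperSpace 𝕜] (hp : 1 < ‖p‖) (hε : 0 < ε) :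
    ∃ c > 0, ∀ z ∈ awayFromThetaZeros p ε, 1 ≤ ‖z‖ → ‖z‖ ≤ ‖p‖ →
      c * thetaSeries ‖p‖ ‖z‖ ≤ ‖thetaSeries p z‖ := by
  set S : Set 𝕜 := awayFromThetaZeros p ε ∩ {z | 1 ≤ ‖z‖ ∧ ‖z‖ ≤ ‖p‖}
  have isCompact_S : IsCompact S := by
    refine (isCompact_closedBall (0 : 𝕜) ‖p‖).of_isClosed_subset ?_ fun z hz => ?_
    · exact (isClosed_awayFromThetaZeros p ε).inter
        ((isClosed_le continuous_const continuous_norm).inter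
          (isClosed_le continuous_norm continuous_const))
    · exact mem_closedBall_zero_iff.2 hz.2.2
  have ne_zero {z : 𝕜} (hz : z ∈ S) : z ≠ 0 := norm_pos_iff.1 (one_pos.trans_le hz.2.1)
  have real_pos {z : 𝕜} (hz : z ∈ S) : 0 < thetaSeries ‖p‖ ‖z‖ :=
    thetaSeries_pos hp (norm_pos_iff.2 (ne_zero hz))
  have continuousOn_ratio : ContinuousOn (fun z => ‖thetaSeries p z‖ / thetaSeries ‖p‖ ‖z‖) S := by
    intro z hz
    have hreal : ContinuousAt (thetaSeries ‖p‖) ‖z‖ :=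
      continuousAt_thetaSeries (by rwa [norm_norm]) (norm_ne_zero_iff.2 (ne_zero hz))
    exact ((continuousAt_thetaSeries hp (ne_zero hz)).norm.div
      (hreal.comp continuous_norm.continuousAt) (real_pos hz).ne').continuousWithinAt
  obtain ⟨c, hc, hcS⟩ := isCompact_S.exists_forall_le' continuousOn_ratio fun z hz =>
    div_pos (norm_pos_iff.2 (thetaSeries_ne_zero_of_mem hp hε (ne_zero hz) hz.1)) (real_pos hz)
  exact ⟨c, hc, fun z hz h₁ h₂ =>
    (le_div_iff₀ (real_pos ⟨hz, h₁, h₂⟩)).1 (hcS z ⟨hz, h₁, h₂⟩)⟩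

theorem exists_mul_thetaSeries_norm_le [ProperSpace 𝕜] (hp : 1 < ‖p‖) (hε : 0 < ε) :
    ∃ c > 0, ∀ z ∈ awayFromThetaZeros p ε, z ≠ 0 →
      c * thetaSeries ‖p‖ ‖z‖ ≤ ‖thetaSeries p z‖ := by
  obtain ⟨c, hc, hcz⟩ := exists_mul_thetaSeries_norm_le_of_mem_annulus hp hε
  refine ⟨c, hc, fun z hz hz₀ => ?_⟩
  have hp₀ : p ≠ 0 := norm_pos_iff.1 (one_pos.trans hp)
  obtain ⟨n, hn, hn'⟩ := exists_mem_Ico_zpow (norm_pos_iff.2 hz₀) hp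
  have hpn : 0 < ‖p‖ ^ n := zpow_pos (norm_pos_iff.2 hp₀) n
  obtain ⟨u, rfl⟩ : ∃ u, z = p ^ n * u := ⟨p ^ (-n) * z, by simp [zpow_ne_zero n hp₀]⟩
  have hu₀ : u ≠ 0 := right_ne_zero_of_mul hz₀
  have hu : u ∈ awayFromThetaZeros p ε := by
    simpa [zpow_ne_zero n hp₀] using zpow_mul_mem_awayFromThetaZeros hp₀ hz (-n)
  rw [norm_mul, norm_zpow] at hn hn'
  have annulus_bound := hcz u hu ((le_mul_iff_one_le_right hpn).1 hn)
    (le_of_mul_le_mul_left (hn'.le.trans_eq (zpow_add_one₀ (norm_ne_zero_iff.2 hp₀) n)) hpn)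
  rw [norm_mul, norm_zpow, thetaSeries_zpow_mul (norm_ne_zero_iff.2 hp₀) (norm_ne_zero_iff.2 hu₀),
    thetaSeries_zpow_mul hp₀ hu₀, norm_mul, norm_mul, norm_zpow, norm_zpow, mul_left_comm]
  gcongr

end LowerBound

section Remainder

/-- The remainder of `f` at `x` after subtracting the terms of order less than `k` of the formal
power series with coefficients `a`. -/
def seriesRemainder {𝕜 : Type*} [Ring 𝕜] (f : 𝕜 → 𝕜) (a : ℕ → 𝕜) (k : ℕ) (x : 𝕜) : 𝕜 :=
  f x - ∑ i ∈ range k, a i * x ^ i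

theorem sum_range_le_mul_two_mul_pow {b : ℕ → ℝ} {A y : ℝ} {k : ℕ} (hA : 0 ≤ A) (hy : 1 ≤ y)
    (hb : ∀ i < k, b i ≤ A * y ^ i) : ∑ i ∈ range k, b i ≤ A * (2 * y) ^ k := by
  have : 0 ≤ y := zero_le_one.trans hy
  calc ∑ i ∈ range k, b i ≤ ∑ _i ∈ range k, A * y ^ k := by
        refine sum_le_sum fun i hi => (hb i (mem_range.1 hi)).trans ?_
        gcongr
        exact (mem_range.1 hi).le
    _ = k * (A * y ^ k) := by rw [sum_const, card_range, nsmul_eq_mul]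
    _ ≤ 2 ^ k * (A * y ^ k) := by
        gcongr
        exact_mod_cast Nat.lt_two_pow_self.le
    _ = A * (2 * y) ^ k := by rw [mul_pow, mul_left_comm]

theorem exists_thetaSeries_le_pow_add_partialThetaTail {P M R : ℝ} (hP : 1 < P) (hM : 0 < M)
    (hR : 0 < R) : ∃ S > 0, ∃ B > 0, ∀ x ≥ R, ∀ k : ℕ,
      thetaSeries P (M * x) ≤ S * ((B * x) ^ k + partialThetaTail P k (M * x)) := by
  obtain ⟨S, hS, hSx⟩ := exists_thetaSeries_le_partialTheta hP (mul_pos hM hR)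
  refine ⟨S, hS, 2 * (M + R⁻¹), by positivity, fun x hx k => ?_⟩
  have hx₀ : 0 < x := hR.trans_le hx
  have one_le : 1 ≤ (M + R⁻¹) * x := by
    calc 1 ≤ R⁻¹ * x := by rwa [inv_mul_eq_div, one_le_div hR]
      _ ≤ (M + R⁻¹) * x := by gcongr; exact le_add_of_nonneg_left hM.le
  have head_le : ∑ n ∈ range k, (P ^ (n + 1).choose 2)⁻¹ * (M * x) ^ n ≤
      1 * (2 * ((M + R⁻¹) * x)) ^ k :=
    sum_range_le_mul_two_mul_pow zero_le_one one_le fun n _ => by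
      gcongr
      · exact inv_le_one_of_one_le₀ (one_le_pow₀ hP.le)
      · exact le_add_of_nonneg_right (inv_pos.2 hR).le
  refine (hSx (M * x) (mul_le_mul_of_nonneg_left hx hM.le)).trans ?_
  rw [partialThetaTail_zero_eq_sum_add hP k, mul_assoc 2]
  gcongr
  rwa [one_mul] at head_le

variable {𝕜 : Type*} [NormedField 𝕜] {f : 𝕜 → 𝕜} {a : ℕ → 𝕜} {x : 𝕜} {g L M R : ℝ}

theorem norm_coeff_le_of_norm_seriesRemainder_le (hg : 1 ≤ g) (hL : 0 ≤ L) (hM : 0 ≤ M)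
    (hx : x ≠ 0)
    (h : ∀ k, ‖seriesRemainder f a k x‖ ≤ L * M ^ k * g ^ k.choose 2 * ‖x‖ ^ k) (k : ℕ) :
    ‖a k‖ ≤ L * (1 + M * ‖x‖) * ((M * g) ^ k * g ^ k.choose 2) := by
  have hx' : 0 < ‖x‖ ^ k := pow_pos (norm_pos_iff.2 hx) k
  have term_eq : a k * x ^ k = seriesRemainder f a k x - seriesRemainder f a (k + 1) x := by
    rw [seriesRemainder, seriesRemainder, sum_range_succ]; ring
  refine le_of_mul_le_mul_right ?_ hx'
  calc ‖a k‖ * ‖x‖ ^ k = ‖seriesRemainder f a k x - seriesRemainder f a (k + 1) x‖ := by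
        rw [← term_eq, norm_mul, norm_pow]
    _ ≤ L * M ^ k * g ^ k.choose 2 * ‖x‖ ^ k +
          L * M ^ (k + 1) * g ^ (k + 1).choose 2 * ‖x‖ ^ (k + 1) :=
        (norm_sub_le _ _).trans (add_le_add (h k) (h (k + 1)))
    _ = L * M ^ k * g ^ k.choose 2 * ‖x‖ ^ k * 1 +
          L * M ^ (k + 1) * g ^ (k + 1).choose 2 * ‖x‖ ^ (k + 1) := by rw [mul_one]
    _ ≤ L * M ^ k * g ^ k.choose 2 * ‖x‖ ^ k * g ^ k +
          L * M ^ (k + 1) * g ^ (k + 1).choose 2 * ‖x‖ ^ (k + 1) := by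
        gcongr
        exact one_le_pow₀ hg
    _ = _ := by rw [choose_two_add_one, pow_add, mul_pow]; ring

theorem norm_sum_range_le_of_norm_coeff_le {A D : ℝ} (hg : 1 ≤ g) (hA : 0 ≤ A) (hD : 0 ≤ D)
    (hR : 0 < R) (ha : ∀ i, ‖a i‖ ≤ A * (D ^ i * g ^ i.choose 2)) (hx : R ≤ ‖x‖) (k : ℕ) :
    ‖∑ i ∈ range k, a i * x ^ i‖ ≤ A * g ^ k.choose 2 * (2 * (D + R⁻¹) * ‖x‖) ^ k := by
  have one_le : 1 ≤ (D + R⁻¹) * ‖x‖ := by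
    calc 1 ≤ R⁻¹ * ‖x‖ := by rwa [inv_mul_eq_div, one_le_div hR]
      _ ≤ (D + R⁻¹) * ‖x‖ := by gcongr; exact le_add_of_nonneg_left hD
  rw [mul_assoc 2]
  refine (norm_sum_le _ _).trans
    (sum_range_le_mul_two_mul_pow (by positivity) one_le fun i hi => ?_)
  calc ‖a i * x ^ i‖ ≤ A * (D ^ i * g ^ i.choose 2) * ‖x‖ ^ i := by
        rw [norm_mul, norm_pow]
        gcongr
        exact ha i
    _ ≤ A * ((D + R⁻¹) ^ i * g ^ k.choose 2) * ‖x‖ ^ i := by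
        gcongr
        exact le_add_of_nonneg_right (inv_pos.2 hR).le
    _ = _ := by rw [mul_pow]; ring

theorem exists_norm_seriesRemainder_le_of_le_norm {S : Set 𝕜} {A D L' M' P : ℝ} (hg : 1 ≤ g)
    (hA : 0 ≤ A) (hD : 0 ≤ D) (hR : 0 < R) (hL' : 0 < L') (hM' : 0 < M') (hP : 1 < P)
    (ha : ∀ i, ‖a i‖ ≤ A * (D ^ i * g ^ i.choose 2))
    (growth : ∀ y ∈ S, ‖f y‖ ≤ L' * thetaSeries P (M' * ‖y‖)) :
    ∃ C > 0, ∃ B > 0, ∀ y ∈ S, R ≤ ‖y‖ → ∀ k, ‖seriesRemainder f a k y‖ ≤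
      C * (g ^ k.choose 2 * (B * ‖y‖) ^ k + partialThetaTail P k (M' * ‖y‖)) := by
  obtain ⟨Q, hQ, E, hE, theta_le⟩ := exists_thetaSeries_le_pow_add_partialThetaTail hP hM' hR
  have hF : 0 < 2 * (D + R⁻¹) := by positivity
  refine ⟨L' * Q + A, by positivity, E + 2 * (D + R⁻¹), by positivity, fun y hy hyR k => ?_⟩
  have tail_nonneg : 0 ≤ partialThetaTail P k (M' * ‖y‖) :=
    partialThetaTail_nonneg (one_pos.trans hP).le k (by positivity)
  have one_le : 1 ≤ g ^ k.choose 2 := one_le_pow₀ hg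
  have f_le : ‖f y‖ ≤ L' * (Q * (g ^ k.choose 2 * ((E + 2 * (D + R⁻¹)) * ‖y‖) ^ k +
      partialThetaTail P k (M' * ‖y‖))) := by
    refine (growth y hy).trans ?_
    grw [theta_le ‖y‖ hyR k, ← one_le, one_mul]
    gcongr
    exact le_add_of_nonneg_right hF.le
  have sum_le : ‖∑ i ∈ range k, a i * y ^ i‖ ≤
      A * (g ^ k.choose 2 * ((E + 2 * (D + R⁻¹)) * ‖y‖) ^ k +
        partialThetaTail P k (M' * ‖y‖)) := by
    refine (norm_sum_range_le_of_norm_coeff_le hg hA hD hR ha hyR k).trans ?_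
    rw [mul_assoc A]
    gcongr
    refine le_add_of_le_of_nonneg ?_ tail_nonneg
    gcongr
    exact le_add_of_nonneg_left hE.le
  refine (norm_sub_le _ _).trans ((add_le_add f_le sum_le).trans_eq ?_)
  ring

theorem exists_norm_seriesRemainder_le {S : Set 𝕜} {L' M' P : ℝ} (hg : 1 ≤ g) (hL : 0 < L)
    (hM : 0 < M) (hR : 0 < R) (hL' : 0 < L') (hM' : 0 < M') (hP : 1 < P)
    (hxS : x ∈ S) (hx : x ≠ 0) (hxR : ‖x‖ < R)
    (near : ∀ y ∈ S, ‖y‖ < R → ∀ k,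
      ‖seriesRemainder f a k y‖ ≤ L * M ^ k * g ^ k.choose 2 * ‖y‖ ^ k)
    (growth : ∀ y ∈ S, ‖f y‖ ≤ L' * thetaSeries P (M' * ‖y‖)) :
    ∃ C > 0, ∃ B > 0, ∀ y ∈ S, ∀ k, ‖seriesRemainder f a k y‖ ≤
      C * (g ^ k.choose 2 * (B * ‖y‖) ^ k + partialThetaTail P k (M' * ‖y‖)) := by
  have coeff_le := norm_coeff_le_of_norm_seriesRemainder_le hg hL.le hM.le hx (near x hxS hxR)
  have : 0 < g := one_pos.trans_le hg
  obtain ⟨C, hC, B, hB, far⟩ := exists_norm_seriesRemainder_le_of_le_norm hg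
    (by positivity) (by positivity) hR hL' hM' hP coeff_le growth
  refine ⟨L + C, by positivity, M + B, by positivity, fun y hy k => ?_⟩
  have tail_nonneg : 0 ≤ partialThetaTail P k (M' * ‖y‖) :=
    partialThetaTail_nonneg (one_pos.trans hP).le k (by positivity)
  rcases lt_or_ge ‖y‖ R with hyR | hyR
  · calc ‖seriesRemainder f a k y‖ ≤ L * (g ^ k.choose 2 * (M * ‖y‖) ^ k + 0) := by
          refine (near y hy hyR k).trans_eq ?_
          rw [mul_pow]; ring
      _ ≤ (L + C) * (g ^ k.choose 2 * ((M + B) * ‖y‖) ^ k + partialThetaTail P k (M' * ‖y‖)) := by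
          gcongr
          exacts [le_add_of_nonneg_right hC.le, le_add_of_nonneg_right hB.le]
  · refine (far y hy hyR k).trans ?_
    gcongr
    exacts [le_add_of_nonneg_left hL.le, le_add_of_nonneg_left hM.le]

end Remainder

section Summation

theorem hasSum_partialThetaTail_mul {ι : Type*} {X W : ι → ℝ} {P M z c : ℝ} (hP : 1 < P)
    (hM : 0 ≤ M) (hz : 0 ≤ z) (hr : M * z / P < 1) (hX : ∀ j, 0 ≤ X j) (hW : ∀ j, 0 ≤ W j)
    (moments : ∀ i : ℕ, HasSum (fun j => X j ^ i * W j) (c * P ^ i.choose 2 * z ^ i)) (k : ℕ) :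
    HasSum (fun j => partialThetaTail P k (M * X j) * W j)
      (c * (M * z / P) ^ k * (1 - M * z / P)⁻¹) := by
  have : 0 < P := one_pos.trans hP
  have hr₀ : 0 ≤ M * z / P := by positivity
  set F : ℕ × ι → ℝ := fun a =>
    (P ^ (a.1 + k + 1).choose 2)⁻¹ * (M * X a.2) ^ (a.1 + k) * W a.2
  have row (n : ℕ) : HasSum (fun j => F (n, j)) (c * (M * z / P) ^ k * (M * z / P) ^ n) := by
    have value : (P ^ (n + k + 1).choose 2)⁻¹ * M ^ (n + k) *
        (c * P ^ (n + k).choose 2 * z ^ (n + k)) = c * (M * z / P) ^ k * (M * z / P) ^ n := by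
      rw [choose_two_add_one, pow_add P, mul_assoc c (_ ^ k), ← pow_add (M * z / P),
        add_comm k, div_pow, mul_pow]
      field_simp
    rw [← value]
    refine ((moments (n + k)).mul_left _).congr_fun fun j => ?_
    simp only [F, mul_pow]
    ring
  have rows := (hasSum_geometric_of_lt_one hr₀ hr).mul_left (c * (M * z / P) ^ k)
  have summable_F : Summable F := by
    refine (summable_prod_of_nonneg fun a => ?_).2 ⟨fun n => (row n).summable, ?_⟩
    · have := hX a.2
      have := hW a.2
      simp only [F, Pi.zero_apply]
      positivity
    · simpa only [(row _).tsum_eq] using rows.summable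
  have total : HasSum F (c * (M * z / P) ^ k * (1 - M * z / P)⁻¹) := by
    simpa only [(summable_F.hasSum.prod_fiberwise row).unique rows] using summable_F.hasSum
  exact ((Equiv.prodComm ι ℕ).hasSum_iff.2 total).prod_fiberwise fun j =>
    (summable_partialThetaTail hP k (M * X j)).hasSum.mul_right (W j)

variable {𝕜 : Type*} [NormedField 𝕜] {p s lam z : 𝕜} {m : ℕ}

theorem zpow_mul_div_mem_awayFromThetaZeros {ε : ℝ} (hs₀ : s ≠ 0) (hs : s ^ m = p) (hz : z ≠ 0)
    (hε : 0 < ε) (sep : ∀ j : ℤ, ε * ‖s ^ j * lam‖ ≤ ‖z + s ^ j * lam‖) (j : ℤ) :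
    s ^ j * (lam / z) ∈ awayFromThetaZeros p (ε / (1 + ε)) := fun n => by
  have hp : p ≠ 0 := hs ▸ pow_ne_zero m hs₀
  have hz' : 0 < ‖z‖ := norm_pos_iff.2 hz
  set y := s ^ (j - m * n) * lam with hy
  have factor : s ^ j * (lam / z) + p ^ n = p ^ n * ((z + y) / z) := by
    rw [hy, zpow_sub₀ hs₀, zpow_mul, zpow_natCast, hs]
    field_simp
    ring
  have dist_le : ε / (1 + ε) ≤ ‖z + y‖ / ‖z‖ := by
    have triangle : ‖z‖ ≤ ‖z + y‖ + ‖y‖ := by simpa using norm_sub_le (z + y) y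
    rw [div_le_div_iff₀ (by positivity) hz']
    nlinarith [sep (j - m * n)]
  rw [factor, norm_mul, norm_zpow, norm_div, mul_comm]
  gcongr

theorem hasSum_moment [CompleteSpace 𝕜] [NeZero m] (hp : 1 < ‖p‖) (hs : s ^ m = p)
    (hlam : lam ≠ 0) (hz : z ≠ 0) (hθ : ∀ j : ℤ, thetaSeries p (s ^ j * (lam / z)) ≠ 0) (i : ℕ) :
    HasSum (fun j : ℤ => (s ^ j * lam) ^ i / thetaSeries p (p * (s ^ j * (lam / z))))
      (m * p ^ i.choose 2 * z ^ i) := by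
  have rescale (j : ℤ) : s ^ j * lam = s ^ j * (lam / z) * z := by field_simp
  simpa only [rescale, mul_pow _ z, div_mul_eq_mul_div] using
    (hasSum_pow_div_thetaSeries_of_pow_eq hp hs (div_ne_zero hlam hz) hθ i).mul_right (z ^ i)

theorem thetaSeries_norm_mul_zpow_mul_pos [NeZero m] (hp : 1 < ‖p‖) (hs : s ^ m = p)
    (hlam : lam ≠ 0) (hz : z ≠ 0) (j : ℤ) :
    0 < thetaSeries ‖p‖ ‖p * (s ^ j * (lam / z))‖ := by
  have hp₀ : p ≠ 0 := norm_pos_iff.1 (one_pos.trans hp)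
  have hs₀ : s ≠ 0 := ne_zero_pow (NeZero.ne m) (hs ▸ hp₀)
  exact thetaSeries_pos hp <| norm_pos_iff.2 <|
    mul_ne_zero hp₀ (mul_ne_zero (zpow_ne_zero j hs₀) (div_ne_zero hlam hz))

theorem hasSum_norm_moment [NeZero m] (hp : 1 < ‖p‖) (hs : s ^ m = p) (hlam : lam ≠ 0)
    (hz : z ≠ 0) (i : ℕ) :
    HasSum (fun j : ℤ => ‖s ^ j * lam‖ ^ i * (thetaSeries ‖p‖ ‖p * (s ^ j * (lam / z))‖)⁻¹)
      (m * ‖p‖ ^ i.choose 2 * ‖z‖ ^ i) := by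
  have hs₀ : s ≠ 0 := ne_zero_pow (NeZero.ne m) (hs ▸ norm_pos_iff.1 (one_pos.trans hp))
  have theta_ne_zero (j : ℤ) : thetaSeries ‖p‖ (‖s‖ ^ j * (‖lam‖ / ‖z‖)) ≠ 0 :=
    (thetaSeries_pos hp (by positivity)).ne'
  have real_moment := hasSum_moment (m := m) (by rwa [norm_norm]) (by rw [← norm_pow, hs])
    (norm_ne_zero_iff.2 hlam) (norm_ne_zero_iff.2 hz) theta_ne_zero i
  simpa only [norm_mul, norm_zpow, norm_div, ← div_eq_mul_inv] using real_moment

theorem hasSum_remainder_bound [NeZero m] {C G B M : ℝ} (hp : 1 < ‖p‖) (hs : s ^ m = p)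
    (hlam : lam ≠ 0) (hz : z ≠ 0) (hM : 0 ≤ M) (hr : M * ‖z‖ / ‖p‖ < 1) (k : ℕ) :
    HasSum (fun j : ℤ =>
        C * (G * (B * ‖s ^ j * lam‖) ^ k + partialThetaTail ‖p‖ k (M * ‖s ^ j * lam‖)) *
          (thetaSeries ‖p‖ ‖p * (s ^ j * (lam / z))‖)⁻¹)
      (C * (G * B ^ k * (m * ‖p‖ ^ k.choose 2 * ‖z‖ ^ k) +
        m * (M * ‖z‖ / ‖p‖) ^ k * (1 - M * ‖z‖ / ‖p‖)⁻¹)) := by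
  have moments := hasSum_norm_moment hp hs hlam hz
  have tail := hasSum_partialThetaTail_mul hp hM (norm_nonneg z) hr (fun j => norm_nonneg _)
    (fun j => (inv_pos.2 (thetaSeries_norm_mul_zpow_mul_pos hp hs hlam hz j)).le) moments k
  refine ((((moments k).mul_left (G * B ^ k)).add tail).mul_left C).congr_fun fun j => ?_
  rw [mul_pow]
  ring

variable [CompleteSpace 𝕜] [NeZero m] {f : 𝕜 → 𝕜} {a : ℕ → 𝕜} {c C G B M : ℝ}

theorem norm_tsum_div_thetaSeries_sub_le (hp : 1 < ‖p‖) (hs : s ^ m = p) (hlam : lam ≠ 0)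
    (hz : z ≠ 0) (hM : 0 ≤ M) (hr : M * ‖z‖ / ‖p‖ < 1) (hc : 0 < c)
    (theta_ne_zero : ∀ j : ℤ, thetaSeries p (s ^ j * (lam / z)) ≠ 0)
    (le_theta : ∀ j : ℤ, c * thetaSeries ‖p‖ ‖p * (s ^ j * (lam / z))‖ ≤
      ‖thetaSeries p (p * (s ^ j * (lam / z)))‖) (k : ℕ)
    (remainder_le : ∀ j : ℤ, ‖seriesRemainder f a k (s ^ j * lam)‖ ≤
      C * (G * (B * ‖s ^ j * lam‖) ^ k + partialThetaTail ‖p‖ k (M * ‖s ^ j * lam‖))) :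
    ‖∑' j : ℤ, f (s ^ j * lam) / thetaSeries p (p * (s ^ j * (lam / z))) -
        ∑ i ∈ range k, a i * (m * p ^ i.choose 2 * z ^ i)‖ ≤
      c⁻¹ * (C * (G * B ^ k * (m * ‖p‖ ^ k.choose 2 * ‖z‖ ^ k) +
        m * (M * ‖z‖ / ‖p‖) ^ k * (1 - M * ‖z‖ / ‖p‖)⁻¹)) := by
  set θ : ℤ → 𝕜 := fun j => thetaSeries p (p * (s ^ j * (lam / z)))
  have bound := (hasSum_remainder_bound (C := C) (G := G) (B := B) hp hs hlam hz hM hr k).mul_left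
    c⁻¹
  have term_le (j : ℤ) := calc
    ‖seriesRemainder f a k (s ^ j * lam) / θ j‖
      ≤ C * (G * (B * ‖s ^ j * lam‖) ^ k + partialThetaTail ‖p‖ k (M * ‖s ^ j * lam‖)) /
          (c * thetaSeries ‖p‖ ‖p * (s ^ j * (lam / z))‖) := by
        rw [norm_div]
        exact div_le_div₀ ((norm_nonneg _).trans (remainder_le j)) (remainder_le j)
          (mul_pos hc (thetaSeries_norm_mul_zpow_mul_pos hp hs hlam hz j)) (le_theta j)
    _ = c⁻¹ * _ := by rw [div_eq_inv_mul, mul_inv, mul_assoc, mul_comm _⁻¹ (C * _)]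
  have head := hasSum_sum (s := range k) fun i _ =>
    (hasSum_moment hp hs hlam hz theta_ne_zero i).mul_left (a i)
  have total : HasSum (fun j : ℤ => f (s ^ j * lam) / θ j) _ :=
    ((Summable.of_norm_bounded bound.summable term_le).hasSum.add head).congr_fun fun j => by
      simp only [seriesRemainder, θ, ← mul_div_assoc, ← Finset.sum_div, ← add_div, sub_add_cancel]
  rw [total.tsum_eq, add_sub_cancel_right]
  exact tsum_of_norm_bounded bound term_le

theorem pow_add_geometric_le {P g B M x : ℝ} {m : ℕ} (hP : 1 ≤ P) (hg : 1 ≤ g) (hB : 0 ≤ B)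
    (hM : 0 ≤ M) (hx : 0 ≤ x) (hr : M * x / P ≤ 1 / 2) (k n : ℕ) :
    g ^ n * B ^ k * (m * P ^ n * x ^ k) + m * (M * x / P) ^ k * (1 - M * x / P)⁻¹ ≤
      m * (3 * (B + M) ^ k * (g * P) ^ n * x ^ k) := by
  have geometric_nonneg : 0 ≤ (1 - M * x / P)⁻¹ := inv_nonneg.2 (by linarith)
  have geometric_le : (1 - M * x / P)⁻¹ ≤ 2 := by
    rw [inv_le_comm₀ (by linarith) two_pos]
    linarith
  have ratio_le : (M * x / P) ^ k ≤ (g * P) ^ n * ((B + M) * x) ^ k := calc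
    (M * x / P) ^ k ≤ 1 * ((B + M) * x) ^ k := by
      rw [one_mul]
      gcongr
      exact (div_le_self (by positivity) hP).trans (by gcongr; exact le_add_of_nonneg_left hB)
    _ ≤ (g * P) ^ n * ((B + M) * x) ^ k := by
      gcongr
      exact one_le_pow₀ (one_le_mul_of_one_le_of_one_le hg hP)
  calc _ ≤ g ^ n * (B + M) ^ k * (m * P ^ n * x ^ k) +
          m * ((g * P) ^ n * ((B + M) * x) ^ k) * 2 := by
        gcongr
        exact le_add_of_nonneg_right hM
    _ = _ := by rw [mul_pow, mul_pow]; ring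

theorem exists_norm_tsum_div_thetaSeries_sub_le {𝕜 : Type*} [NormedField 𝕜] [ProperSpace 𝕜]
    {p s lam : 𝕜} {m : ℕ} [NeZero m] {f : 𝕜 → 𝕜} {a : ℕ → 𝕜} {C B M g ε : ℝ} (hp : 1 < ‖p‖)
    (hs : s ^ m = p) (hlam : lam ≠ 0) (hC : 0 < C) (hB : 0 < B) (hM : 0 < M) (hg : 1 ≤ g)
    (hε : 0 < ε) (remainder_le : ∀ (j : ℤ) (k : ℕ), ‖seriesRemainder f a k (s ^ j * lam)‖ ≤
      C * (g ^ k.choose 2 * (B * ‖s ^ j * lam‖) ^ k +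
        partialThetaTail ‖p‖ k (M * ‖s ^ j * lam‖))) :
    ∃ L > 0, ∃ N > 0, ∀ (k : ℕ) (z : 𝕜), z ≠ 0 → ‖z‖ < ‖p‖ / (2 * M) →
      (∀ j : ℤ, ε * ‖s ^ j * lam‖ ≤ ‖z + s ^ j * lam‖) →
      ‖∑' j : ℤ, f (s ^ j * lam) / thetaSeries p (p * (s ^ j * (lam / z))) -
          ∑ i ∈ range k, a i * (m * p ^ i.choose 2 * z ^ i)‖ ≤
        m * (L * N ^ k * (g * ‖p‖) ^ k.choose 2 * ‖z‖ ^ k) := by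
  have hp₀ : p ≠ 0 := norm_pos_iff.1 (one_pos.trans hp)
  have hs₀ : s ≠ 0 := ne_zero_pow (NeZero.ne m) (hs ▸ hp₀)
  have hε' : 0 < ε / (1 + ε) := by positivity
  obtain ⟨c, hc, le_theta⟩ := exists_mul_thetaSeries_norm_le hp hε'
  refine ⟨c⁻¹ * C * 3, by positivity, B + M, by positivity, fun k z hz hzR sep => ?_⟩
  have away := zpow_mul_div_mem_awayFromThetaZeros hs₀ hs hz hε sep
  have arg_ne_zero (j : ℤ) : s ^ j * (lam / z) ≠ 0 :=
    mul_ne_zero (zpow_ne_zero j hs₀) (div_ne_zero hlam hz)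
  have hr : M * ‖z‖ / ‖p‖ ≤ 1 / 2 := by
    rw [lt_div_iff₀ (by positivity)] at hzR
    rw [div_le_div_iff₀ (one_pos.trans hp) two_pos]
    linarith
  refine (norm_tsum_div_thetaSeries_sub_le hp hs hlam hz hM.le (by linarith) hc
    (fun j => thetaSeries_ne_zero_of_mem hp hε' (arg_ne_zero j) (away j))
    (fun j => le_theta _ (by simpa using zpow_mul_mem_awayFromThetaZeros hp₀ (away j) 1)
      (mul_ne_zero hp₀ (arg_ne_zero j))) k fun j => remainder_le j k).trans ?_
  calc _ ≤ c⁻¹ * (C * (m * (3 * (B + M) ^ k * (g * ‖p‖) ^ k.choose 2 * ‖z‖ ^ k))) := by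
        gcongr
        exact pow_add_geometric_le hp.le hg hB.le hM.le (norm_nonneg z) hr k (k.choose 2)
    _ = _ := by ring

end Summation

section Spiral

theorem qpow_add (q : ℂ) (α β : ℚ) : qpow q (α + β) = qpow q α * qpow q β := by
  rw [qpow, qpow, qpow, ← Complex.exp_add, Rat.cast_add, add_mul]

theorem qpow_zpow (q : ℂ) (α : ℚ) (n : ℤ) : qpow q α ^ n = qpow q (n * α) := by
  rw [qpow, qpow, ← Complex.exp_int_mul, Rat.cast_mul, Rat.cast_intCast, mul_assoc]

theorem qpow_intCast_div (q : ℂ) (j : ℤ) (x : ℚ) : qpow q (j / x) = qpow q (1 / x) ^ j := by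
  rw [qpow_zpow, mul_one_div]

theorem qpow_one_div_pow {μ : ℚ} {K m : ℕ} (hμ : μ ≠ 0) (hm : m ≠ 0) (hK : (K : ℚ) = μ * m)
    (q : ℂ) : qpow q (1 / K) ^ m = qpow q (1 / μ) := by
  rw [← zpow_natCast, qpow_zpow, hK, Int.cast_natCast]
  congr 1
  field_simp

theorem qpow_mul_sub_one_div (q : ℂ) (n : ℕ) (μ : ℚ) :
    qpow q ((n * (n - 1) : ℚ) / (2 * μ)) = qpow q (1 / μ) ^ n.choose 2 := by
  rw [← zpow_natCast, qpow_zpow, Int.cast_natCast, Nat.cast_choose_two, mul_one_div, div_div]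

variable {q lam : ℂ}

theorem norm_qpow (hq : q ≠ 0) (α : ℚ) : ‖qpow q α‖ = ‖q‖ ^ (α : ℝ) := by
  rw [qpow, Complex.norm_exp, Real.rpow_def_of_pos (norm_pos_iff.2 hq), ← Complex.ofReal_ratCast,
    Complex.re_ofReal_mul, Complex.log_re, mul_comm]

theorem one_lt_norm_qpow (hq : 1 < ‖q‖) {α : ℚ} (hα : 0 < α) : 1 < ‖qpow q α‖ := by
  rw [norm_qpow (norm_pos_iff.1 (one_pos.trans hq))]
  exact Real.one_lt_rpow hq (Rat.cast_pos.2 hα)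

theorem norm_rpow_mul_sub_one_div (hq : q ≠ 0) (n : ℕ) (μ : ℚ) :
    ‖q‖ ^ (((n * (n - 1) : ℚ) / (2 * μ) : ℚ) : ℝ) = ‖qpow q (1 / μ)‖ ^ n.choose 2 := by
  rw [← norm_qpow hq, qpow_mul_sub_one_div, norm_pow]

theorem one_sub_inv_norm_le_norm_zpow_add_one {t : ℂ} (ht : 1 < ‖t‖) (n : ℤ) :
    1 - ‖t‖⁻¹ ≤ ‖t ^ n + 1‖ := by
  have inv_pos : 0 < ‖t‖⁻¹ := by positivity
  rcases lt_trichotomy n 0 with hn | rfl | hn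
  · have norm_le : ‖t ^ n‖ ≤ ‖t‖⁻¹ := by
      rw [norm_zpow, ← zpow_neg_one]
      exact zpow_le_zpow_right₀ ht.le (by lia)
    have := norm_sub_le_norm_add 1 (t ^ n)
    rw [norm_one, add_comm] at this
    linarith
  · rw [zpow_zero, one_add_one_eq_two, Complex.norm_two]
    linarith
  · have le_norm : ‖t‖ ≤ ‖t ^ n‖ := by
      rw [norm_zpow, ← zpow_one ‖t‖, ← zpow_mul, one_mul]
      exact zpow_le_zpow_right₀ ht.le (by lia)
    have := norm_sub_le_norm_add (t ^ n) 1
    rw [norm_one] at this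
    have : ‖t‖ * ‖t‖⁻¹ = 1 := mul_inv_cancel₀ (by positivity)
    nlinarith

theorem exists_mul_norm_le_norm_qpow_mul_add (hq : 1 < ‖q‖) {K K₁ : ℕ} (hK : 0 < K)
    (hK₁ : 0 < K₁) (lam : ℂ) : ∃ δ > 0, ∀ i j : ℤ,
      δ * ‖qpow q (i / K) * lam‖ ≤ ‖qpow q (j / K₁) * lam + qpow q (i / K) * lam‖ := by
  set t := qpow q (1 / (K * K₁)) with ht_def
  have ht : 1 < ‖t‖ := one_lt_norm_qpow hq (by positivity)
  refine ⟨1 - ‖t‖⁻¹, sub_pos.2 (inv_lt_one_of_one_lt₀ ht), fun i j => ?_⟩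
  have ratio : qpow q (j / K₁) = t ^ (j * K - i * K₁) * qpow q (i / K) := by
    rw [ht_def, qpow_zpow, ← qpow_add]
    congr 1
    push_cast
    field_simp
    ring
  rw [ratio, mul_assoc, ← add_one_mul, norm_mul (_ + 1)]
  gcongr
  exact one_sub_inv_norm_le_norm_zpow_add_one ht _

theorem qLaplace_eq {μ : ℚ} {K m : ℕ} (hμ : μ ≠ 0) (hK : (K : ℚ) = μ * m) (f : ℂ → ℂ) (z : ℂ) :
    qLaplace q μ K lam f z = (m : ℂ)⁻¹ * ∑' j : ℤ, f (qpow q (1 / K) ^ j * lam) /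
      thetaSeries (qpow q (1 / μ)) (qpow q (1 / μ) * (qpow q (1 / K) ^ j * (lam / z))) := by
  have normalization : (μ : ℂ) / K = (m : ℂ)⁻¹ := by
    have hK' : (K : ℂ) = μ * m := by exact_mod_cast congrArg (Rat.cast (K := ℂ)) hK
    rw [hK', div_mul_cancel_left₀ (Rat.cast_ne_zero.2 hμ)]
  rw [qLaplace, normalization]
  congr 1
  refine tsum_congr fun j => ?_
  rw [qpow_add, qpow_intCast_div, mul_assoc, mul_div_assoc, mul_div_assoc]
  rfl

variable {μ : ℚ} {K : ℕ} {f : ℂ → ℂ} {a : ℕ → ℂ}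

theorem exists_norm_seriesRemainder_le_of_qAsymptotic (hq : 1 < ‖q‖) (hK : 0 < K) {K₁ : ℕ}
    (hK₁ : 0 < K₁) (hlam : lam ≠ 0) (hasym : qAsymptotic q μ K lam f a) :
    ∃ R > 0, ∃ L > 0, ∃ M > 0, ∀ (j : ℤ) (k : ℕ), ‖qpow q (1 / K₁) ^ j * lam‖ < R →
      ‖seriesRemainder f a k (qpow q (1 / K₁) ^ j * lam)‖ ≤
        L * M ^ k * ‖qpow q (1 / μ)‖ ^ k.choose 2 * ‖qpow q (1 / K₁) ^ j * lam‖ ^ k := by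
  have hq₀ : q ≠ 0 := norm_pos_iff.1 (one_pos.trans hq)
  obtain ⟨ε₀, hε₀, R₀, hR₀, asym⟩ := hasym
  obtain ⟨δ, hδ, separation⟩ := exists_mul_norm_le_norm_qpow_mul_add hq hK hK₁ lam
  obtain ⟨ε, hε, hε_lt⟩ := exists_between (lt_min hε₀ hδ)
  obtain ⟨R, hR, hR_lt⟩ := exists_between hR₀
  obtain ⟨L, hL, M, hM, bound⟩ := asym ε hε (hε_lt.trans_le (min_le_left _ _)) R hR hR_lt
  refine ⟨R, hR, L, hL, M, hM, fun j k hj => ?_⟩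
  have ne_zero : qpow q (1 / K₁) ^ j * lam ≠ 0 :=
    mul_ne_zero (zpow_ne_zero j (Complex.exp_ne_zero _)) hlam
  rw [← norm_rpow_mul_sub_one_div hq₀]
  refine (bound k _ ne_zero hj fun i => ?_).le
  rw [← qpow_intCast_div]
  refine le_trans ?_ (separation i j)
  gcongr
  exact (hε_lt.trans_le (min_le_right _ _)).le

theorem exists_qpow_zpow_mul_norm_lt (hq : 1 < ‖q‖) (hK : 0 < K) (lam : ℂ) {R : ℝ} (hR : 0 < R) :
    ∃ j : ℤ, ‖qpow q (1 / K) ^ j * lam‖ < R := by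
  have hs : 1 < ‖qpow q (1 / K)‖ := one_lt_norm_qpow hq (by positivity)
  have tendsto_zero := (tendsto_pow_atTop_nhds_zero_of_lt_one
    (inv_nonneg.2 (norm_nonneg (qpow q (1 / K)))) (inv_lt_one_of_one_lt₀ hs)).mul_const ‖lam‖
  rw [zero_mul] at tendsto_zero
  obtain ⟨n, hn⟩ := (tendsto_zero.eventually_lt_const hR).exists
  exact ⟨-n, by rwa [norm_mul, zpow_neg, zpow_natCast, norm_inv, norm_pow, ← inv_pow]⟩

theorem exists_norm_seriesRemainder_spiral_le (hq : 1 < ‖q‖) (hμ : 0 < μ) (hK : 0 < K) {K₁ : ℕ}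
    (hK₁ : 0 < K₁) (hlam : lam ≠ 0) (hasym : qAsymptotic q μ K lam f a) {P L M : ℝ} (hP : 1 < P)
    (hL : 0 < L) (hM : 0 < M) (growth : ∀ j : ℤ, ‖f (qpow q (1 / K₁) ^ j * lam)‖ ≤
      L * thetaSeries P (M * ‖qpow q (1 / K₁) ^ j * lam‖)) :
    ∃ C > 0, ∃ B > 0, ∀ (j : ℤ) (k : ℕ), ‖seriesRemainder f a k (qpow q (1 / K₁) ^ j * lam)‖ ≤
      C * (‖qpow q (1 / μ)‖ ^ k.choose 2 * (B * ‖qpow q (1 / K₁) ^ j * lam‖) ^ k +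
        partialThetaTail P k (M * ‖qpow q (1 / K₁) ^ j * lam‖)) := by
  obtain ⟨R, hR, L₀, hL₀, M₀, hM₀, near⟩ :=
    exists_norm_seriesRemainder_le_of_qAsymptotic hq hK hK₁ hlam hasym
  obtain ⟨j₀, hj₀⟩ := exists_qpow_zpow_mul_norm_lt hq hK₁ lam hR
  have ne_zero : qpow q (1 / K₁) ^ j₀ * lam ≠ 0 :=
    mul_ne_zero (zpow_ne_zero j₀ (Complex.exp_ne_zero _)) hlam
  obtain ⟨C, hC, B, hB, bound⟩ := exists_norm_seriesRemainder_le
    (S := Set.range fun j : ℤ => qpow q (1 / K₁) ^ j * lam)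
    (one_lt_norm_qpow hq (one_div_pos.2 hμ)).le hL₀ hM₀ hR hL hM hP ⟨j₀, rfl⟩ ne_zero hj₀
    (Set.forall_mem_range.2 fun j hj k => near j k hj) (Set.forall_mem_range.2 growth)
  exact ⟨C, hC, B, hB, Set.forall_mem_range.1 bound⟩

theorem norm_qLaplace_sub_le {m : ℕ} (hm : 0 < m) (hμ : μ ≠ 0) (hK : (K : ℚ) = μ * m) {k : ℕ}
    {z : ℂ} {b : ℝ} (h : ‖∑' j : ℤ, f (qpow q (1 / K) ^ j * lam) /
        thetaSeries (qpow q (1 / μ)) (qpow q (1 / μ) * (qpow q (1 / K) ^ j * (lam / z))) -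
          ∑ i ∈ range k, a i * (m * qpow q (1 / μ) ^ i.choose 2 * z ^ i)‖ ≤ m * b) :
    ‖qLaplace q μ K lam f z -
      ∑ i ∈ range k, a i * qpow q ((i * (i - 1) : ℚ) / (2 * μ)) * z ^ i‖ ≤ b := by
  have hm' : (m : ℂ) ≠ 0 := Nat.cast_ne_zero.2 hm.ne'
  refine le_of_mul_le_mul_left (le_trans (le_of_eq ?_) h) (Nat.cast_pos.2 hm)
  rw [qLaplace_eq hμ hK, ← Complex.norm_natCast m, ← norm_mul, mul_sub, mul_inv_cancel_left₀ hm',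
    mul_sum]
  simp only [qpow_mul_sub_one_div, mul_assoc, mul_left_comm (m : ℂ)]

theorem exists_norm_apply_le_of_memH (hlam : lam ≠ 0) (hf : memH q μ K lam f) :
    ∃ L > 0, ∃ M > 0, ∀ j : ℤ, ‖f (qpow q (j / K) * lam)‖ ≤
      L * thetaR (qpowR ‖q‖ (1 / μ)) (M * ‖qpow q (j / K) * lam‖) := by
  obtain ⟨-, ε, hε, Ω, -, -, spiral_subset, -, L, hL, M, hM, growth⟩ := hf
  refine ⟨L, hL, M, hM, fun j => (growth _ (spiral_subset ?_)).le⟩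
  have ne_zero : qpow q (j / K) * lam ≠ 0 := mul_ne_zero (Complex.exp_ne_zero _) hlam
  refine ⟨ne_zero, j, ?_⟩
  rw [sub_self, norm_zero]
  positivity

end Spiral

theorem qLaplace_asymptotic_general (q : ℂ) (hq : 1 < ‖q‖) (μ : ℚ) (hμ : 0 < μ) (K : ℕ)
    (hK : 0 < K) (μ₁ : ℚ) (hμ₁ : 0 < μ₁) (K₁ : ℕ)
    (hK₁μ₁ : ∃ m : ℕ, 0 < m ∧ (K₁ : ℚ) = μ₁ * m)
    (lam : ℂ) (hlam : lam ≠ 0) (f : ℂ → ℂ) (a : ℕ → ℂ) (hasym : qAsymptotic q μ K lam f a)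
    (growth : ∃ L > 0, ∃ M > 0, ∀ j : ℤ, ‖f (qpow q (j / K₁) * lam)‖ ≤
      L * thetaR (qpowR ‖q‖ (1 / μ₁)) (M * ‖qpow q (j / K₁) * lam‖))
    (μ₂ : ℚ) (hμ₂ : μ₂⁻¹ = μ⁻¹ + μ₁⁻¹) :
    qAsymptotic q μ₂ K₁ lam (qLaplace q μ₁ K₁ lam f)
      (fun n : ℕ => a n * qpow q ((n * (n - 1) : ℚ) / (2 * μ₁))) := by
  have hq₀ : q ≠ 0 := norm_pos_iff.1 (one_pos.trans hq)
  obtain ⟨m, hm, hK₁⟩ := hK₁μ₁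
  have : NeZero m := ⟨hm.ne'⟩
  have hK₁_pos : 0 < K₁ := (Nat.cast_pos (α := ℚ)).1 (by rw [hK₁]; positivity)
  have hp : 1 < ‖qpow q (1 / μ₁)‖ := one_lt_norm_qpow hq (one_div_pos.2 hμ₁)
  have hg : 1 < ‖qpow q (1 / μ)‖ := one_lt_norm_qpow hq (one_div_pos.2 hμ)
  obtain ⟨L, hL, M, hM, growth⟩ := growth
  simp only [qpow_intCast_div, qpowR, ← norm_qpow hq₀] at growth
  obtain ⟨C, hC, B, hB, remainder_le⟩ :=
    exists_norm_seriesRemainder_spiral_le hq hμ hK hK₁_pos hlam hasym hp hL hM growth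
  refine ⟨1, one_pos, ‖qpow q (1 / μ₁)‖ / (2 * M), by positivity, fun ε hε _ R _ hR => ?_⟩
  obtain ⟨L', hL', N, hN, bound⟩ := exists_norm_tsum_div_thetaSeries_sub_le hp
    (qpow_one_div_pow hμ₁.ne' hm.ne' hK₁ q) hlam hC hB hM hg.le hε remainder_le
  refine ⟨2 * L', by positivity, N, hN, fun k z hz hzR sep => ?_⟩
  simp only [qpow_intCast_div] at sep
  refine (norm_qLaplace_sub_le hm hμ₁.ne' hK₁ (bound k z hz (hzR.trans hR) sep)).trans_lt ?_
  rw [norm_rpow_mul_sub_one_div hq₀, one_div μ₂, hμ₂, qpow_add, norm_mul, ← one_div, ← one_div]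
  gcongr
  linarith

/-- if `f ∼^{[λ]}_{μ,K} f̂` and `f ∈ ℍ^{[λ]}_{μ₁,K₁}` with `K₁ ∣ K`, then
`L^{[λ]}_{μ₁,K₁}(f) ∼^{[λ]}_{μ₂,K₁} L̂_{μ₁}(f̂)` where `μ₂⁻¹ = μ⁻¹ + μ₁⁻¹` and
`L̂_{μ₁}` is the formal `q`-Laplace transform `∑ aₗ ζˡ ↦ ∑ aₗ q^{ℓ(ℓ-1)/(2μ₁)} zˡ`. -/
theorem qLaplace_asymptotic (q : ℂ) (hq : 1 < ‖q‖) (μ : ℚ) (hμ : 0 < μ)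
    (K : ℕ) (hK : 0 < K) (hKμ : ∃ m : ℕ, 0 < m ∧ (K : ℚ) = μ * m)
    (μ₁ : ℚ) (hμ₁ : 0 < μ₁) (K₁ : ℕ) (hK₁ : 0 < K₁)
    (hK₁μ₁ : ∃ m : ℕ, 0 < m ∧ (K₁ : ℚ) = μ₁ * m) (hdvd : K₁ ∣ K)
    (lam : ℂ) (hlam : lam ≠ 0) (f : ℂ → ℂ) (a : ℕ → ℂ)
    (hasym : qAsymptotic q μ K lam f a) (hf : memH q μ₁ K₁ lam f)
    (μ₂ : ℚ) (hμ₂ : μ₂⁻¹ = μ⁻¹ + μ₁⁻¹) :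
    qAsymptotic q μ₂ K₁ lam (qLaplace q μ₁ K₁ lam f)
      (fun n : ℕ => a n * qpow q ((n * (n - 1) : ℚ) / (2 * μ₁))) :=
  qLaplace_asymptotic_general q hq μ hμ K hK μ₁ hμ₁ K₁ hK₁μ₁ lam hlam f a hasym
    (exists_norm_apply_le_of_memH hlam hf) μ₂ hμ₂
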